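/- Let U ⊆ ℝ² be open and η : U → ℝ³ be twice continuously differentiable, with induced metric g_{ij}(y) = ⟨∂_iη(y), ∂_jη(y)⟩ invertible at every y ∈ U, inverse entries g^{ij}, and g = det(g_{ij}) > 0. Define Π^α_μ = δ^α_μ − Σ_{k,l=1}^{2} g^{kl} ∂_kη^α ∂_lη_μ and Δ_g η^α = (1/√g) Σ_{i,j=1}^{2} ∂_i(√g · g^{ij} ∂_j η^α). Then at every point of U and for every α ∈ {1,2,3}: √g Δ_g η^α = √g Σ_{i,j=1}^{2} g^{ij} Σ_{μ=1}^{3} Π^α_μ ∂²_{ij}η^μ. -/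

import Mathlib

open Matrix

/-- The vector of partial derivatives `∂_i η(y) ∈ ℝ³` of a map `η : ℝ² → ℝ³`. -/
noncomputable def pdEmb (η : (Fin 2 → ℝ) → Fin 3 → ℝ) (i : Fin 2)
    (y : Fin 2 → ℝ) : Fin 3 → ℝ :=
  fderiv ℝ η y (Pi.single i 1)

/-- The second partial derivatives `∂²_{ij} η(y) ∈ ℝ³` of a map `η : ℝ² → ℝ³`. -/
noncomputable def pd2Emb (η : (Fin 2 → ℝ) → Fin 3 → ℝ) (i j : Fin 2)
    (y : Fin 2 → ℝ) : Fin 3 → ℝ :=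
  fderiv ℝ (fun z => fderiv ℝ η z (Pi.single j 1)) y (Pi.single i 1)

/-- The induced metric `g_{ij}(y) = ⟨∂_i η(y), ∂_j η(y)⟩`. -/
noncomputable def inducedMetric (η : (Fin 2 → ℝ) → Fin 3 → ℝ)
    (y : Fin 2 → ℝ) : Matrix (Fin 2) (Fin 2) ℝ :=
  Matrix.of fun i j => ∑ a, pdEmb η i y a * pdEmb η j y a

/-- The projection `Π^α_μ = δ^α_μ − g^{kl} ∂_kη^α ∂_lη_μ` onto the normal
direction of the embedded surface. -/
noncomputable def normalProjEmb (η : (Fin 2 → ℝ) → Fin 3 → ℝ)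
    (y : Fin 2 → ℝ) (α μ : Fin 3) : ℝ :=
  (if α = μ then 1 else 0)
    - ∑ k, ∑ l, (inducedMetric η y)⁻¹ k l * pdEmb η k y α * pdEmb η l y μ

theorem hasFDerivAt_pdEmb_apply {η : (Fin 2 → ℝ) → Fin 3 → ℝ} {y : Fin 2 → ℝ}
    (hη : ContDiffAt ℝ 2 η y) (j : Fin 2) (a : Fin 3) :
    ∃ L : (Fin 2 → ℝ) →L[ℝ] ℝ, HasFDerivAt (fun z => pdEmb η j z a) L y ∧
      ∀ i, L (Pi.single i 1) = pd2Emb η i j y a := by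
  have h1 : DifferentiableAt ℝ (fderiv ℝ η) y :=
    (hη.fderiv_right (m := 1) (by norm_num)).differentiableAt (by norm_num)
  have h2 : DifferentiableAt ℝ (fun z => fderiv ℝ η z (Pi.single j 1)) y :=
    h1.clm_apply (differentiableAt_const _)
  exact ⟨_, hasFDerivAt_pi'.1 h2.hasFDerivAt a, fun i => rfl⟩

theorem pd2Emb_comm {η : (Fin 2 → ℝ) → Fin 3 → ℝ} {y : Fin 2 → ℝ}
    (hη : ContDiffAt ℝ 2 η y) (i j : Fin 2) : pd2Emb η i j y = pd2Emb η j i y := by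
  have h1 : DifferentiableAt ℝ (fderiv ℝ η) y :=
    (hη.fderiv_right (m := 1) (by norm_num)).differentiableAt (by norm_num)
  have h2 : IsSymmSndFDerivAt ℝ η y := hη.isSymmSndFDerivAt (by simp)
  have h3 : ∀ i j, pd2Emb η i j y
      = fderiv ℝ (fderiv ℝ η) y (Pi.single i 1) (Pi.single j 1) := by
    intro i j
    rw [pd2Emb, fderiv_clm_apply h1 (differentiableAt_const _)]
    simp
  rw [h3, h3]
  exact h2 _ _

theorem hasFDerivAt_inducedMetric_apply {η : (Fin 2 → ℝ) → Fin 3 → ℝ} {y : Fin 2 → ℝ}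
    (hη : ContDiffAt ℝ 2 η y) (k l : Fin 2) :
    ∃ L : (Fin 2 → ℝ) →L[ℝ] ℝ, HasFDerivAt (fun z => inducedMetric η z k l) L y ∧
      ∀ i, L (Pi.single i 1) = ∑ a, pd2Emb η i k y a * pdEmb η l y a
        + ∑ a, pd2Emb η i l y a * pdEmb η k y a := by
  choose P hP hPd using hasFDerivAt_pdEmb_apply hη
  simp only [inducedMetric, Matrix.of_apply]
  refine ⟨_, HasFDerivAt.fun_sum fun a _ => (hP k a).fun_mul (hP l a), fun i => ?_⟩
  simp only [_root_.sum_apply, _root_.add_apply, _root_.smul_apply, smul_eq_mul, hPd]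
  rw [← Finset.sum_add_distrib]
  exact Finset.sum_congr rfl fun a _ => by ring

theorem inducedMetric_comm (η : (Fin 2 → ℝ) → Fin 3 → ℝ) (y : Fin 2 → ℝ) (k l : Fin 2) :
    inducedMetric η y k l = inducedMetric η y l k := by
  simp only [inducedMetric, Matrix.of_apply]
  exact Finset.sum_congr rfl fun _ _ => mul_comm _ _

/-- The derivative of `√D · (D⁻¹ · u) · p`, the shape of the summands in the divergence form of
the Laplace–Beltrami operator. -/
theorem fderiv_sqrt_mul_inv_mul {E : Type*} [NormedAddCommGroup E] [NormedSpace ℝ E]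
    {D u p : E → ℝ} {D' u' p' : E →L[ℝ] ℝ} {y : E} (hD : HasFDerivAt D D' y)
    (hu : HasFDerivAt u u' y) (hp : HasFDerivAt p p' y) (hpos : 0 < D y) (v : E) :
    fderiv ℝ (fun z => √(D z) * ((D z)⁻¹ * u z) * p z) y v
      = √(D y) * ((D y)⁻¹ * (u' v * p y + u y * p' v)
        - (D y)⁻¹ ^ 2 * D' v / 2 * u y * p y) := by
  have hinv : HasFDerivAt (fun z => (D z)⁻¹) _ y :=
    (hasDerivAt_inv hpos.ne').comp_hasFDerivAt y hD
  rw [(((hD.sqrt hpos.ne').fun_mul (hinv.fun_mul hu)).fun_mul hp).fderiv]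
  simp only [_root_.add_apply, _root_.smul_apply, smul_eq_mul]
  have hs : √(D y) ≠ 0 := (Real.sqrt_pos.2 hpos).ne'
  have hsq : D y = √(D y) ^ 2 := (Real.sq_sqrt hpos.le).symm
  set s := √(D y)
  rw [hsq]
  field_simp
  ring

theorem sum_normalProjEmb_mul (η : (Fin 2 → ℝ) → Fin 3 → ℝ) (y : Fin 2 → ℝ) (α : Fin 3)
    (w : Fin 3 → ℝ) :
    ∑ μ, normalProjEmb η y α μ * w μ
      = w α - ∑ k, ∑ l, (inducedMetric η y)⁻¹ k l * pdEmb η k y α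
        * ∑ μ, w μ * pdEmb η l y μ := by
  simp only [normalProjEmb, sub_mul, Finset.sum_sub_distrib, ite_mul, one_mul, zero_mul,
    Finset.sum_ite_eq, Finset.mem_univ, if_true]
  simp only [Fin.sum_univ_two, Fin.sum_univ_three]
  ring

theorem inducedMetric_inv_apply (η : (Fin 2 → ℝ) → Fin 3 → ℝ) (y : Fin 2 → ℝ) (i j : Fin 2) :
    (inducedMetric η y)⁻¹ i j
      = (inducedMetric η y).det⁻¹ * (inducedMetric η y).adjugate i j := by
  rw [Matrix.inv_def, Ring.inverse_eq_inv', Matrix.smul_apply, smul_eq_mul]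

/-- For a `C²` embedding `η : U ⊆ ℝ² → ℝ³` with induced metric `g` of positive
determinant, `√g Δ_g η^α = √g g^{ij} Π^α_μ ∂²_{ij}η^μ`, with `Δ_g` the
Laplace–Beltrami operator in divergence form and `Π` the normal projection. -/
theorem sqrt_mul_laplaceBeltrami_eq_proj (U : Set (Fin 2 → ℝ)) (hU : IsOpen U)
    (η : (Fin 2 → ℝ) → Fin 3 → ℝ) (hη : ContDiffOn ℝ 2 η U)
    (hgdet : ∀ y ∈ U, 0 < (inducedMetric η y).det)
    (y : Fin 2 → ℝ) (hy : y ∈ U) (α : Fin 3) :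
    Real.sqrt (inducedMetric η y).det *
        ((Real.sqrt (inducedMetric η y).det)⁻¹ *
          ∑ i, ∑ j, fderiv ℝ
            (fun z => Real.sqrt (inducedMetric η z).det * (inducedMetric η z)⁻¹ i j
              * pdEmb η j z α) y (Pi.single i 1))
      = Real.sqrt (inducedMetric η y).det
          * ∑ i, ∑ j, (inducedMetric η y)⁻¹ i j
              * ∑ μ, normalProjEmb η y α μ * pd2Emb η i j y μ := by
  have hη' : ContDiffAt ℝ 2 η y := hη.contDiffAt (hU.mem_nhds hy)
  have hpos := hgdet y hy
  choose P hP hPd using hasFDerivAt_pdEmb_apply hη'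
  choose G hG hGd using hasFDerivAt_inducedMetric_apply hη'
  have hD := ((hG 0 0).fun_mul (hG 1 1)).fun_sub ((hG 0 1).fun_mul (hG 1 0))
  simp only [← Matrix.det_fin_two] at hD
  have h00 : HasFDerivAt (fun z => (inducedMetric η z).adjugate 0 0) (G 1 1) y := by
    simpa [Matrix.adjugate_fin_two] using hG 1 1
  have h01 : HasFDerivAt (fun z => (inducedMetric η z).adjugate 0 1) (-G 0 1) y := by
    simpa [Matrix.adjugate_fin_two] using (hG 0 1).fun_neg
  have h10 : HasFDerivAt (fun z => (inducedMetric η z).adjugate 1 0) (-G 1 0) y := by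
    simpa [Matrix.adjugate_fin_two] using (hG 1 0).fun_neg
  have h11 : HasFDerivAt (fun z => (inducedMetric η z).adjugate 1 1) (G 0 0) y := by
    simpa [Matrix.adjugate_fin_two] using hG 0 0
  rw [mul_inv_cancel_left₀ (Real.sqrt_pos.2 hpos).ne']
  simp only [sum_normalProjEmb_mul, inducedMetric_inv_apply]
  simp only [Fin.sum_univ_two]
  rw [fderiv_sqrt_mul_inv_mul hD h00 (hP 0 α) hpos, fderiv_sqrt_mul_inv_mul hD h01 (hP 1 α) hpos,
    fderiv_sqrt_mul_inv_mul hD h10 (hP 0 α) hpos, fderiv_sqrt_mul_inv_mul hD h11 (hP 1 α) hpos]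
  simp only [_root_.add_apply, _root_.sub_apply, _root_.neg_apply, _root_.smul_apply,
    smul_eq_mul, hPd, hGd, pd2Emb_comm hη' 1 0, inducedMetric_comm η y 1 0,
    Matrix.adjugate_fin_two, Matrix.of_apply, Matrix.cons_val', Matrix.cons_val_zero,
    Matrix.cons_val_one, Matrix.cons_val_fin_one]
  have hdet : (inducedMetric η y).det = inducedMetric η y 0 0 * inducedMetric η y 1 1
      - inducedMetric η y 0 1 * inducedMetric η y 0 1 := by
    rw [Matrix.det_fin_two, inducedMetric_comm η y 1 0]
  generalize ∑ a, pd2Emb η 0 0 y a * pdEmb η 0 y a = c000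
  generalize ∑ a, pd2Emb η 0 0 y a * pdEmb η 1 y a = c001
  generalize ∑ a, pd2Emb η 0 1 y a * pdEmb η 0 y a = c010
  generalize ∑ a, pd2Emb η 0 1 y a * pdEmb η 1 y a = c011
  generalize ∑ a, pd2Emb η 1 1 y a * pdEmb η 0 y a = c110
  generalize ∑ a, pd2Emb η 1 1 y a * pdEmb η 1 y a = c111
  generalize (inducedMetric η y).det = D at *
  generalize inducedMetric η y 0 0 = A at *
  generalize inducedMetric η y 0 1 = B at *
  generalize inducedMetric η y 1 1 = C at *
  rw [← mul_add, ← mul_add, ← mul_add]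
  have hD0 := hpos.ne'
  field_simp
  rw [hdet]
  ring
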